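/- arXiv:2402.11705 — 2 statements merged into one kernel-verified Lean document; each statement's English description precedes it below -/
import Mathlib

section
/- Under the exponential decay assumption on γ, θ, h and boundedness assumptions, the Sobolev loss 𝓔(θ) = ∫₀^∞ (α₁|((γ−θ)*h)(t)|² + α₂|((γ−θ)*h)'(t)|²) e^{-2ωt} dt satisfies m_ω^h ‖θ−γ‖²_{L²(ρ)} ≤ 𝓔(θ) ≤ M_ω^h ‖θ−γ‖²_{L²(ρ)}, where ρ has density e^{-2ωt} on [0,∞). -/
open MeasureTheory Complex Real

/-- Laplace transform of a real function on `[0,∞)`. -/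
noncomputable def laplace (f : ℝ → ℝ) (z : ℂ) : ℂ :=
  ∫ t in Set.Ioi (0 : ℝ), (f t : ℂ) * Complex.exp (-z * t)

/-- Causal convolution on `[0,∞)`. -/
noncomputable def conv (f h : ℝ → ℝ) (t : ℝ) : ℝ :=
  ∫ s in (0 : ℝ)..t, f (t - s) * h s

/-- Combined spectral weight `α₁|ĥ(z)|² + α₂|zĥ(z)|²` along the line `Re z = ω`. -/
noncomputable def specWeight (h : ℝ → ℝ) (α₁ α₂ ω τ : ℝ) : ℝ :=
  α₁ * ‖laplace h ((ω : ℂ) + τ * Complex.I)‖ ^ 2 +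
    α₂ * ‖((ω : ℂ) + τ * Complex.I) * laplace h ((ω : ℂ) + τ * Complex.I)‖ ^ 2

open FourierTransform SchwartzMap in
lemma aux_plancherel (f : ℝ → ℂ) (hf : Integrable f) (hf2 : MemLp f 2) :
    MemLp (𝓕 f) 2 ∧ ∫ x, ‖𝓕 f x‖ ^ 2 = ∫ x, ‖f x‖ ^ 2 := by
  have hcont : Continuous (𝓕 f) := by
    exact VectorFourier.fourierIntegral_continuous Real.continuous_fourierChar
      (L := innerₗ ℝ) (by exact continuous_inner) hf
  set F : Lp ℂ 2 (volume : Measure ℝ) := hf2.toLp f with hF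
  have hae : ∀ᵐ x, (𝓕 F : Lp ℂ 2 (volume : Measure ℝ)) x = 𝓕 f x := by
    apply ae_eq_of_integral_contDiff_smul_eq
    · exact (Lp.memLp (𝓕 F)).locallyIntegrable (by norm_num)
    · exact hcont.locallyIntegrable
    · intro g g_smooth g_cpt
      have hg₁ : HasCompactSupport (Complex.ofRealCLM ∘ g) := g_cpt.comp_left rfl
      have hg₂ : ContDiff ℝ (⊤ : ℕ∞) (Complex.ofRealCLM ∘ g) := by fun_prop
      let G : 𝓢(ℝ, ℂ) := hg₁.toSchwartzMap hg₂
      have h1 := congrArg (fun T => T G) (Lp.fourier_toTemperedDistribution_eq F)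
      simp only [TemperedDistribution.fourier_apply, Lp.toTemperedDistribution_apply] at h1
      have h2 : ∫ x, (𝓕 G) x • F x = ∫ x, (𝓕 G) x • f x := by
        apply integral_congr_ae
        filter_upwards [hf2.coeFn_toLp] with x hx
        rw [hF, hx]
      have h3 : ∫ x, (𝓕 G) x • f x = ∫ x, G x • (𝓕 f) x := by
        have := VectorFourier.integral_fourierIntegral_smul_eq_flip (μ := volume) (ν := volume)
          (L := innerₗ ℝ) Real.continuous_fourierChar (by exact continuous_inner) (G.integrable) hf
        rw [flip_innerₗ] at this
        exact this
      have h4 : ∀ x, G x = (g x : ℂ) := fun x => by simp [G]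
      have h5 : ∀ (x : ℝ) (z : ℂ), g x • z = G x • z := fun x z => by
        rw [h4]; simp
      simp only [h5]
      rw [← h1, h2, h3]
  have hm : MemLp (𝓕 f) 2 := (memLp_congr_ae hae).1 (Lp.memLp (𝓕 F))
  refine ⟨hm, ?_⟩
  have key : ∀ (u : ℝ → ℂ) (U : Lp ℂ 2 (volume : Measure ℝ)), (∀ᵐ x, U x = u x) →
      ∫ x, ‖u x‖ ^ 2 = ‖U‖ ^ 2 := by
    intro u U h
    have := L2.inner_def (𝕜 := ℂ) U U
    rw [inner_self_eq_norm_sq_to_K] at this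
    have h' : ∫ a, inner ℂ (U a) (U a) = ((∫ x, ‖u x‖ ^ 2 : ℝ) : ℂ) := by
      rw [← integral_complex_ofReal]
      apply integral_congr_ae
      filter_upwards [h] with x hx
      rw [hx, inner_self_eq_norm_sq_to_K]
      simp
    rw [h'] at this
    apply Complex.ofReal_injective
    rw [← this]; simp
  rw [key _ _ hae, key _ F hf2.coeFn_toLp, Lp.norm_fourier_eq]

lemma aux_conv_swap (d k : ℝ → ℝ) (t : ℝ) : conv d k t = ∫ s in (0:ℝ)..t, d s * k (t - s) := by
  have := intervalIntegral.integral_comp_sub_left (a := 0) (b := t)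
    (fun s => d s * k (t - s)) t
  simp only [sub_sub_cancel, sub_zero, sub_self] at this
  rw [← this]; rfl

lemma aux_conv_hasDerivAt (d k : ℝ → ℝ) (hd : Continuous d) (hk : ContDiff ℝ 1 k) (x0 : ℝ) :
    HasDerivAt (conv d k) (d x0 * k 0 + conv d (deriv k) x0) x0 := by
  have hkc : Continuous k := hk.continuous
  have hk' : Continuous (deriv k) := hk.continuous_deriv le_rfl
  have e : conv d k = fun x => (∫ s in x0..x, d s * k (x - s)) +
      ∫ s in (0:ℝ)..x0, d s * k (x - s) := by
    funext x
    rw [aux_conv_swap, add_comm, intervalIntegral.integral_add_adjacent_intervals] <;>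
    · apply Continuous.intervalIntegrable; fun_prop
  rw [e]
  refine HasDerivAt.add ?_ ?_
  · have e2 : (fun x => ∫ s in x0..x, d s * k (x - s)) =
      fun x => (x - x0) * ∫ u in (0:ℝ)..1, d (x0 + (x - x0) * u) * k (x - (x0 + (x - x0) * u)) := by
      funext x
      have := intervalIntegral.smul_integral_comp_add_mul (a := 0) (b := 1)
        (fun s => d s * k (x - s)) (x - x0) x0
      simp only [mul_zero, add_zero, mul_one, add_sub_cancel, smul_eq_mul] at this
      exact this.symm
    rw [e2]
    have hc : Continuous (fun x => ∫ u in (0:ℝ)..1,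
        d (x0 + (x - x0) * u) * k (x - (x0 + (x - x0) * u))) := by
      apply intervalIntegral.continuous_parametric_intervalIntegral_of_continuous'
      fun_prop
    rw [hasDerivAt_iff_tendsto_slope]
    have h0 := hc.tendsto x0
    simp only [sub_self, zero_mul, add_zero, intervalIntegral.integral_const, sub_zero, smul_eq_mul, one_mul] at h0
    refine (h0.mono_left nhdsWithin_le_nhds).congr' ?_
    filter_upwards [self_mem_nhdsWithin] with x hx
    have : x - x0 ≠ 0 := sub_ne_zero.2 hx
    rw [slope_def_field]
    field_simp
    simp
  · rw [aux_conv_swap]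
    obtain ⟨K, hK⟩ := (((isCompact_closedBall x0 1).prod (isCompact_uIcc (a := 0) (b := x0)))).exists_bound_of_continuousOn
      (f := fun p : ℝ × ℝ => d p.2 * deriv k (p.1 - p.2)) (by fun_prop)
    refine (intervalIntegral.hasDerivAt_integral_of_dominated_loc_of_deriv_le
      (F := fun x s => d s * k (x - s)) (F' := fun x s => d s * deriv k (x - s))
      (s := Metric.closedBall x0 1) (bound := fun _ => K)
      (Metric.closedBall_mem_nhds x0 one_pos) ?_ ?_ ?_ ?_ ?_ ?_).2
    · exact Filter.Eventually.of_forall fun x => by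
        apply Continuous.aestronglyMeasurable; fun_prop
    · apply Continuous.intervalIntegrable; fun_prop
    · apply Continuous.aestronglyMeasurable; fun_prop
    · refine Filter.Eventually.of_forall fun t ht x hx => ?_
      exact hK (x, t) ⟨hx, Set.uIoc_subset_uIcc ht⟩
    · exact intervalIntegrable_const
    · refine Filter.Eventually.of_forall fun t ht x hx => ?_
      have h1 : HasDerivAt k (deriv k (x - t)) (x - t) :=
        (hk.differentiable one_ne_zero).differentiableAt.hasDerivAt
      have h2 := h1.comp_sub_const x t
      exact h2.const_mul _

lemma aux_norm_exp (ω : ℝ) (z : ℂ) (hz : z.re = ω) (t : ℝ) :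
    ‖Complex.exp (-z * t)‖ = Real.exp (-ω * t) := by
  rw [Complex.norm_exp]; simp [hz]

lemma aux_integrableOn (f : ℝ → ℝ) (K ω : ℝ) (hω : 0 < ω) (hf : Continuous f)
    (hb : ∀ t, 0 ≤ t → |f t| ≤ K) (z : ℂ) (hz : z.re = ω) :
    IntegrableOn (fun t : ℝ => (f t : ℂ) * Complex.exp (-z * t)) (Set.Ioi 0) := by
  have h1 : IntegrableOn (fun t : ℝ => K * Real.exp (-ω * t)) (Set.Ioi 0) :=
    (integrableOn_exp_mul_Ioi (neg_lt_zero.2 hω) 0).const_mul K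
  refine Integrable.mono' h1 (by apply Continuous.aestronglyMeasurable; fun_prop) ?_
  filter_upwards [ae_restrict_mem measurableSet_Ioi] with t ht
  rw [norm_mul, aux_norm_exp ω z hz, Complex.norm_real, Real.norm_eq_abs]
  gcongr
  exact hb t (le_of_lt ht)

open FourierTransform in
lemma aux_laplace_plancherel (f : ℝ → ℝ) (K ω : ℝ) (hω : 0 < ω) (hf : Continuous f)
    (hb : ∀ t, 0 ≤ t → |f t| ≤ K) :
    Integrable (fun ξ : ℝ => ‖laplace f ((ω : ℂ) + (2 * π * ξ : ℝ) * Complex.I)‖ ^ 2) ∧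
    IntegrableOn (fun t => f t ^ 2 * Real.exp (-2 * ω * t)) (Set.Ioi 0) ∧
    ∫ t in Set.Ioi (0 : ℝ), f t ^ 2 * Real.exp (-2 * ω * t) =
      ∫ ξ : ℝ, ‖laplace f ((ω : ℂ) + (2 * π * ξ : ℝ) * Complex.I)‖ ^ 2 := by
  set g : ℝ → ℂ := Set.indicator (Set.Ioi 0) (fun t : ℝ => (f t : ℂ) * Complex.exp (-(ω : ℂ) * t))
    with hg
  have hgi : Integrable g := by
    rw [hg, integrable_indicator_iff measurableSet_Ioi]
    exact aux_integrableOn f K ω hω hf hb ω (by simp)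
  have hsq : ∀ t, ‖g t‖ ^ 2 = Set.indicator (Set.Ioi 0)
      (fun t => f t ^ 2 * Real.exp (-2 * ω * t)) t := by
    intro t
    by_cases ht : t ∈ Set.Ioi (0 : ℝ)
    · rw [hg, Set.indicator_of_mem ht, Set.indicator_of_mem ht, norm_mul,
        aux_norm_exp ω ω (by simp), mul_pow, ← Real.exp_nat_mul, Complex.norm_real,
        Real.norm_eq_abs, sq_abs]
      congr 2
      push_cast; ring
    · rw [hg, Set.indicator_of_notMem ht, Set.indicator_of_notMem ht]; simp
  have hInt : IntegrableOn (fun t => f t ^ 2 * Real.exp (-2 * ω * t)) (Set.Ioi 0) := by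
    have h1 : IntegrableOn (fun t : ℝ => K ^ 2 * Real.exp ((-2 * ω) * t)) (Set.Ioi 0) :=
      (integrableOn_exp_mul_Ioi (by linarith) 0).const_mul _
    refine Integrable.mono' h1 (by apply Continuous.aestronglyMeasurable; fun_prop) ?_
    filter_upwards [ae_restrict_mem measurableSet_Ioi] with t ht
    rw [norm_mul, Real.norm_eq_abs, Real.norm_eq_abs, abs_pow, Real.abs_exp]
    gcongr
    exact hb t (le_of_lt ht)
  have hg2 : MemLp g 2 := by
    rw [memLp_two_iff_integrable_sq_norm hgi.1]
    simp_rw [hsq]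
    rw [integrable_indicator_iff measurableSet_Ioi]
    exact hInt
  have hF : ∀ ξ : ℝ, 𝓕 g ξ = laplace f ((ω : ℂ) + (2 * π * ξ : ℝ) * Complex.I) := by
    intro ξ
    rw [Real.fourier_real_eq_integral_exp_smul, laplace, ← integral_indicator measurableSet_Ioi]
    congr 1; ext t
    by_cases ht : t ∈ Set.Ioi (0 : ℝ)
    · rw [hg, Set.indicator_of_mem ht, Set.indicator_of_mem ht, smul_eq_mul, mul_left_comm,
        ← Complex.exp_add]
      congr 2
      push_cast; ring
    · rw [hg, Set.indicator_of_notMem ht, Set.indicator_of_notMem ht]; simp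
  obtain ⟨h1, h2⟩ := aux_plancherel g hgi hg2
  have h3 := (memLp_two_iff_integrable_sq_norm h1.1).1 h1
  simp_rw [hF] at h2 h3
  refine ⟨h3, hInt, ?_⟩
  rw [h2]
  simp_rw [hsq]
  rw [integral_indicator measurableSet_Ioi]

lemma aux_laplace_conv (d k : ℝ → ℝ) (K K' ω : ℝ) (hω : 0 < ω) (hd : Continuous d)
    (hk : Continuous k) (hdb : ∀ t, 0 ≤ t → |d t| ≤ K) (hkb : ∀ t, 0 ≤ t → |k t| ≤ K')
    (z : ℂ) (hz : z.re = ω) :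
    laplace (conv d k) z = laplace d z * laplace k z := by
  have := integral_posConvolution (aux_integrableOn d K ω hω hd hdb z hz)
    (aux_integrableOn k K' ω hω hk hkb z hz) (ContinuousLinearMap.mul ℝ ℂ)
  simp only [ContinuousLinearMap.mul_apply'] at this
  unfold laplace
  rw [← this]
  congr 1; ext t
  rw [aux_conv_swap, ← intervalIntegral.integral_ofReal, ← intervalIntegral.integral_mul_const]
  congr 1; ext s
  have : Complex.exp (-z * t) = Complex.exp (-z * s) * Complex.exp (-z * (t - s : ℝ)) := by
    rw [← Complex.exp_add]; congr 1; push_cast; ring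
  rw [this]; push_cast; ring

lemma aux_laplace_deriv (k : ℝ → ℝ) (K K' ω : ℝ) (hω : 0 < ω) 
    (hk : ContDiff ℝ 1 k) (hkb : ∀ t, 0 ≤ t → |k t| ≤ K) (hkb' : ∀ t, 0 ≤ t → |deriv k t| ≤ K')
    (z : ℂ) (hz : z.re = ω) :
    laplace (deriv k) z = z * laplace k z - k 0 := by
  have hk' : Continuous (deriv k) := hk.continuous_deriv le_rfl
  have i1 := aux_integrableOn k K ω hω hk.continuous hkb z hz
  have i2 := aux_integrableOn (deriv k) K' ω hω hk' hkb' z hz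
  have hder : ∀ t : ℝ, HasDerivAt (fun t : ℝ => (k t : ℂ) * Complex.exp (-z * t))
      (((deriv k t : ℝ) : ℂ) * Complex.exp (-z * t) - z * ((k t : ℂ) * Complex.exp (-z * t))) t := by
    intro t
    have h1 : HasDerivAt (fun t : ℝ => (k t : ℂ)) ((deriv k t : ℝ) : ℂ) t :=
      ((hk.differentiable one_ne_zero).differentiableAt.hasDerivAt (x := t)).ofReal_comp
    have h2 : HasDerivAt (fun t : ℝ => Complex.exp (-z * t)) (Complex.exp (-z * t) * (-z * 1)) t :=
      ((hasDerivAt_id t).ofReal_comp.const_mul (-z)).cexp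
    refine (h1.mul h2).congr_deriv ?_
    ring
  have hlim : Filter.Tendsto (fun t : ℝ => (k t : ℂ) * Complex.exp (-z * t)) Filter.atTop (nhds 0) := by
    have h0 : Filter.Tendsto (fun t : ℝ => K * Real.exp (-ω * t)) Filter.atTop (nhds 0) := by
      have : Filter.Tendsto (fun t : ℝ => -ω * t) Filter.atTop Filter.atBot :=
        Filter.tendsto_id.const_mul_atTop_of_neg (neg_lt_zero.2 hω)
      simpa using (Real.tendsto_exp_atBot.comp this).const_mul K
    refine squeeze_zero_norm' ?_ h0
    filter_upwards [Filter.eventually_ge_atTop 0] with t ht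
    rw [norm_mul, aux_norm_exp ω z hz, Complex.norm_real, Real.norm_eq_abs]
    gcongr
    exact hkb t ht
  have := integral_Ioi_of_hasDerivAt_of_tendsto' (a := 0) (fun t _ => hder t)
    (i2.sub (i1.const_mul z)) hlim
  rw [integral_sub i2 (i1.const_mul z), integral_const_mul] at this
  simp only [ofReal_zero, mul_zero, Complex.exp_zero, mul_one, zero_sub] at this
  unfold laplace
  rw [sub_eq_iff_eq_add] at this
  rw [this]; ring

lemma aux_conv_bound (d k : ℝ → ℝ) (K C σ : ℝ) (hσ : 0 < σ) (hK : 0 ≤ K) (hC : 0 ≤ C)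
    (hdb : ∀ t, 0 ≤ t → |d t| ≤ K) (hkb : ∀ t, 0 ≤ t → |k t| ≤ C * Real.exp (-σ * t))
    (t : ℝ) (ht : 0 ≤ t) : |conv d k t| ≤ K * C * σ⁻¹ := by
  have h1 : ‖conv d k t‖ ≤ ∫ s in (0:ℝ)..t, K * (C * Real.exp (-σ * s)) := by
    apply intervalIntegral.norm_integral_le_of_norm_le ht
    · refine Filter.Eventually.of_forall fun s hs => ?_
      rw [norm_mul]
      exact mul_le_mul (hdb _ (by linarith [hs.2])) (hkb _ hs.1.le) (abs_nonneg _) hK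
    · apply Continuous.intervalIntegrable; fun_prop
  refine h1.trans ?_
  have h2 : ∫ s in (0:ℝ)..t, Real.exp (-σ * s) = σ⁻¹ * (1 - Real.exp (-σ * t)) := by
    rw [intervalIntegral.integral_comp_mul_left (fun x => Real.exp x) (by linarith), integral_exp]
    simp [inv_neg]; ring
  rw [intervalIntegral.integral_const_mul, intervalIntegral.integral_const_mul, h2, ← mul_assoc,
    ← mul_assoc]
  have : 0 ≤ K * C * σ⁻¹ := by positivity
  nlinarith [Real.exp_pos (-σ * t)]

/-- **Coercivity of the Sobolev loss.** With `m_ω^h = inf`, `M_ω^h = sup` of the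
spectral weight of `h` on the line `Re z = ω`, the Sobolev loss
`𝓔(θ) = ∫₀^∞ (α₁|((γ−θ)*h)(t)|² + α₂|((γ−θ)*h)'(t)|²) e^{-2ωt} dt` satisfies
`m_ω^h ‖θ−γ‖²_{L²(ρ)} ≤ 𝓔(θ) ≤ M_ω^h ‖θ−γ‖²_{L²(ρ)}`. -/
theorem sobolev_loss_coercivity (γ θ h : ℝ → ℝ) (C σ α₁ α₂ ω : ℝ)
    (hC : 0 < C) (hσ : 0 < σ) (hα₁ : 0 < α₁) (hα₂ : 0 < α₂) (hα : α₁ + α₂ = 1)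
    (hω : 0 < ω)
    (hsmoothγ : ContDiff ℝ (⊤ : ℕ∞) γ) (hsmoothθ : ContDiff ℝ (⊤ : ℕ∞) θ) (hsmoothh : ContDiff ℝ (⊤ : ℕ∞) h)
    (hdecayγ : ∀ t : ℝ, 0 ≤ t → |γ t| ≤ C * Real.exp (-σ * t))
    (hdecayθ : ∀ t : ℝ, 0 ≤ t → |θ t| ≤ C * Real.exp (-σ * t))
    (hdecayh : ∀ t : ℝ, 0 ≤ t → |h t| ≤ C * Real.exp (-σ * t))
    (hdecayγ' : ∀ t : ℝ, 0 ≤ t → |deriv γ t| ≤ C * Real.exp (-σ * t))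
    (hdecayθ' : ∀ t : ℝ, 0 ≤ t → |deriv θ t| ≤ C * Real.exp (-σ * t))
    (hdecayh' : ∀ t : ℝ, 0 ≤ t → |deriv h t| ≤ C * Real.exp (-σ * t))
    (hm : 0 < ⨅ τ : ℝ, specWeight h α₁ α₂ ω τ)
    (hM : BddAbove (Set.range fun τ : ℝ => specWeight h α₁ α₂ ω τ)) :
    (⨅ τ : ℝ, specWeight h α₁ α₂ ω τ) *
        (∫ t in Set.Ioi (0 : ℝ), (θ t - γ t) ^ 2 * Real.exp (-2 * ω * t))
      ≤ (∫ t in Set.Ioi (0 : ℝ),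
          (α₁ * (conv (fun s => γ s - θ s) h t) ^ 2 +
            α₂ * (deriv (conv (fun s => γ s - θ s) h) t) ^ 2) * Real.exp (-2 * ω * t)) ∧
    (∫ t in Set.Ioi (0 : ℝ),
          (α₁ * (conv (fun s => γ s - θ s) h t) ^ 2 +
            α₂ * (deriv (conv (fun s => γ s - θ s) h) t) ^ 2) * Real.exp (-2 * ω * t))
      ≤ (⨆ τ : ℝ, specWeight h α₁ α₂ ω τ) *
        (∫ t in Set.Ioi (0 : ℝ), (θ t - γ t) ^ 2 * Real.exp (-2 * ω * t)) := by
  have bd : ∀ (f : ℝ → ℝ), (∀ t : ℝ, 0 ≤ t → |f t| ≤ C * Real.exp (-σ * t)) →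
      ∀ t, 0 ≤ t → |f t| ≤ C := by
    intro f hf t ht
    refine (hf t ht).trans (mul_le_of_le_one_right hC.le (Real.exp_le_one_iff.2 ?_))
    nlinarith
  set d : ℝ → ℝ := fun s => γ s - θ s with hd
  have hdc : Continuous d := hsmoothγ.continuous.sub hsmoothθ.continuous
  have hdb : ∀ t, 0 ≤ t → |d t| ≤ C + C := fun t ht =>
    (abs_sub _ _).trans (add_le_add (bd γ hdecayγ t ht) (bd θ hdecayθ t ht))
  have hhb := bd h hdecayh
  have hhb' := bd _ hdecayh'
  have hh1 : ContDiff ℝ 1 h := hsmoothh.of_le (by exact_mod_cast le_top)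
  have hh2 : ContDiff ℝ 1 (deriv h) :=
    (contDiff_infty_iff_deriv.1 hsmoothh).2.of_le (by exact_mod_cast le_top)
  have hcd : deriv (conv d h) = fun t => d t * h 0 + conv d (deriv h) t := by
    funext t
    exact (aux_conv_hasDerivAt d h hdc hh1 t).deriv
  have hcc : Continuous (conv d h) := continuous_iff_continuousAt.2 fun t =>
    (aux_conv_hasDerivAt d h hdc hh1 t).continuousAt
  have hcc' : Continuous (conv d (deriv h)) := continuous_iff_continuousAt.2 fun t =>
    (aux_conv_hasDerivAt d _ hdc hh2 t).continuousAt
  have hdcc : Continuous (deriv (conv d h)) := by rw [hcd]; fun_prop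
  have hcb := aux_conv_bound d h (C + C) C σ hσ (by positivity) hC.le hdb hdecayh
  have hcb' := aux_conv_bound d (deriv h) (C + C) C σ hσ (by positivity) hC.le hdb hdecayh'
  have hdcb : ∀ t, 0 ≤ t → |deriv (conv d h) t| ≤ (C + C) * |h 0| + (C + C) * C * σ⁻¹ := by
    intro t ht
    rw [hcd]
    refine (abs_add_le _ _).trans (add_le_add ?_ (hcb' t ht))
    rw [abs_mul]
    gcongr
    exact hdb t ht
  obtain ⟨pd1, -, pd3⟩ := aux_laplace_plancherel d _ ω hω hdc hdb
  obtain ⟨pc1, pc2, pc3⟩ := aux_laplace_plancherel _ _ ω hω hcc hcb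
  obtain ⟨pe1, pe2, pe3⟩ := aux_laplace_plancherel _ _ ω hω hdcc hdcb
  have hL1 : ∀ z : ℂ, z.re = ω → laplace (conv d h) z = laplace d z * laplace h z := fun z hz =>
    aux_laplace_conv d h _ _ ω hω hdc hh1.continuous hdb hhb z hz
  have hL2 : ∀ z : ℂ, z.re = ω → laplace (deriv (conv d h)) z = laplace d z * (z * laplace h z) := by
    intro z hz
    have e1 : laplace (deriv (conv d h)) z = laplace d z * h 0 + laplace (conv d (deriv h)) z := by
      rw [hcd]
      unfold laplace
      rw [← integral_mul_const, ← integral_add ((aux_integrableOn d _ ω hω hdc hdb z hz).mul_const _)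
        (aux_integrableOn _ _ ω hω hcc' hcb' z hz)]
      congr 1; ext t; push_cast; ring
    rw [e1, aux_laplace_conv d (deriv h) _ _ ω hω hdc hh2.continuous hdb hhb' z hz,
      aux_laplace_deriv h _ _ ω hω hh1 hhb hhb' z hz]
    ring
  have hre : ∀ x : ℝ, ((ω : ℂ) + (x : ℝ) * Complex.I).re = ω := by intro x; simp
  have hnorm : (∫ t in Set.Ioi (0 : ℝ), (θ t - γ t) ^ 2 * Real.exp (-2 * ω * t)) =
      ∫ ξ : ℝ, ‖laplace d ((ω : ℂ) + (2 * π * ξ : ℝ) * Complex.I)‖ ^ 2 := by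
    rw [← pd3]
    congr 1; ext t; simp only [hd]; ring
  have hpt : ∀ ξ : ℝ, α₁ * ‖laplace (conv d h) ((ω : ℂ) + (2 * π * ξ : ℝ) * Complex.I)‖ ^ 2 +
      α₂ * ‖laplace (deriv (conv d h)) ((ω : ℂ) + (2 * π * ξ : ℝ) * Complex.I)‖ ^ 2 =
      specWeight h α₁ α₂ ω (2 * π * ξ) *
        ‖laplace d ((ω : ℂ) + (2 * π * ξ : ℝ) * Complex.I)‖ ^ 2 := by
    intro ξ
    rw [hL1 _ (hre _), hL2 _ (hre _), specWeight, norm_mul (laplace d _), norm_mul (laplace d _)]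
    ring
  have hIW : Integrable (fun ξ : ℝ => specWeight h α₁ α₂ ω (2 * π * ξ) *
        ‖laplace d ((ω : ℂ) + (2 * π * ξ : ℝ) * Complex.I)‖ ^ 2) := by
    simp_rw [← hpt]
    exact (pc1.const_mul α₁).add (pe1.const_mul α₂)
  have hE : (∫ t in Set.Ioi (0 : ℝ),
          (α₁ * (conv d h t) ^ 2 + α₂ * (deriv (conv d h) t) ^ 2) * Real.exp (-2 * ω * t)) =
      ∫ ξ : ℝ, specWeight h α₁ α₂ ω (2 * π * ξ) *
        ‖laplace d ((ω : ℂ) + (2 * π * ξ : ℝ) * Complex.I)‖ ^ 2 := by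
    simp_rw [← hpt]
    rw [integral_add (pc1.const_mul α₁) (pe1.const_mul α₂), integral_const_mul, integral_const_mul,
      ← pc3, ← pe3, ← integral_const_mul, ← integral_const_mul,
      ← integral_add (pc2.const_mul α₁) (pe2.const_mul α₂)]
    congr 1; ext t; ring
  have hbelow : BddBelow (Set.range fun τ : ℝ => specWeight h α₁ α₂ ω τ) :=
    ⟨0, by rintro _ ⟨τ, rfl⟩; simp only [specWeight]; positivity⟩
  rw [hnorm, hE, ← integral_const_mul, ← integral_const_mul]
  constructor
  · refine integral_mono (pd1.const_mul _) hIW fun ξ => ?_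
    exact mul_le_mul_of_nonneg_right (ciInf_le hbelow _) (by positivity)
  · refine integral_mono hIW (pd1.const_mul _) fun ξ => ?_
    exact mul_le_mul_of_nonneg_right (le_ciSup hM _) (by positivity)
end

section
/- Let γ satisfy g = γ*h, and let γ_ε be any function satisfying g_ε = γ_ε*h. Then ‖γ − γ_ε‖²_{L²(ρ)} ≤ (1/m_ω^h) ‖g − g_ε‖²_{H¹_α(ρ)}, where ‖f‖²_{H¹_α(ρ)} = ∫₀^∞ (α₁|f|² + α₂|f'|²) e^{-2ωt} dt. -/
open MeasureTheory Complex Real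

section helpers
open FourierTransform SchwartzMap Set Filter Topology

lemma plancherel_aux (f : ℝ → ℂ) (h1 : Integrable f) (h2 : MemLp f 2) :
    (𝓕 (h2.toLp f) : Lp ℂ 2 (volume : Measure ℝ)) =ᵐ[volume] 𝓕 f := by
  have hcont : Continuous (𝓕 f) :=
    VectorFourier.fourierIntegral_continuous Real.continuous_fourierChar
      (by exact continuous_inner) h1
  apply ae_eq_of_integral_contDiff_smul_eq
  · exact (Lp.memLp _).locallyIntegrable (by norm_num)
  · exact hcont.locallyIntegrable
  · intro φ hφ hφc
    have hg₁ : HasCompactSupport (Complex.ofRealCLM ∘ φ) := hφc.comp_left rfl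
    have hg₂ : ContDiff ℝ (⊤ : ℕ∞) (Complex.ofRealCLM ∘ φ) := by fun_prop
    set G : 𝓢(ℝ, ℂ) := hg₁.toSchwartzMap hg₂ with hG
    have hGx : ∀ x, G x = (φ x : ℂ) := fun x => by simp [hG]
    have e1 := congrArg (fun T : TemperedDistribution ℝ ℂ => T G)
      (Lp.fourier_toTemperedDistribution_eq (h2.toLp f))
    simp only [TemperedDistribution.fourier_apply, Lp.toTemperedDistribution_apply] at e1
    calc ∫ x, φ x • (𝓕 (h2.toLp f) : Lp ℂ 2 (volume : Measure ℝ)) x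
        = ∫ x, G x • (𝓕 (h2.toLp f) : Lp ℂ 2 (volume : Measure ℝ)) x := by
          exact integral_congr_ae (Eventually.of_forall fun x => by simp [hGx])
      _ = ∫ x, (𝓕 G) x • (h2.toLp f) x := e1.symm
      _ = ∫ x, (𝓕 G) x • f x := by
          apply integral_congr_ae
          filter_upwards [h2.coeFn_toLp] with x hx
          rw [hx]
      _ = ∫ x, G x • 𝓕 f x := by
          have := VectorFourier.integral_fourierIntegral_smul_eq_flip (μ := volume) (ν := volume)
            (e := Real.fourierChar) (L := innerₗ ℝ) (f := (G : ℝ → ℂ)) (g := f)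
            Real.continuous_fourierChar (by exact continuous_inner) G.integrable h1
          rw [flip_innerₗ] at this
          rw [SchwartzMap.fourier_coe]
          exact this
      _ = ∫ x, φ x • 𝓕 f x := by
          exact integral_congr_ae (Eventually.of_forall fun x => by simp [hGx])

lemma plancherel (f : ℝ → ℂ) (h1 : Integrable f) (h2 : MemLp f 2) :
    Integrable (fun ξ => ‖𝓕 f ξ‖ ^ 2) ∧ ∫ ξ, ‖𝓕 f ξ‖ ^ 2 = ∫ t, ‖f t‖ ^ 2 := by
  have h := plancherel_aux f h1 h2
  have hm : MemLp (𝓕 f) 2 := (memLp_congr_ae h).1 (Lp.memLp _)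
  refine ⟨(memLp_two_iff_integrable_sq_norm hm.1).1 hm, ?_⟩
  have e := Lp.norm_fourier_eq (h2.toLp f)
  have e2 : eLpNorm (𝓕 f) 2 = eLpNorm f 2 := by
    rw [Lp.norm_def, Lp.norm_def, eLpNorm_congr_ae h, eLpNorm_congr_ae h2.coeFn_toLp] at e
    exact (ENNReal.toReal_eq_toReal_iff' hm.2.ne h2.2.ne).1 e
  have e3 := congrArg ENNReal.toReal e2
  rw [hm.eLpNorm_eq_integral_rpow_norm (by norm_num) (by norm_num),
    h2.eLpNorm_eq_integral_rpow_norm (by norm_num) (by norm_num)] at e3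
  have p1 : 0 ≤ ∫ ξ, ‖𝓕 f ξ‖ ^ 2 := integral_nonneg fun _ => by positivity
  have p2 : 0 ≤ ∫ ξ, ‖f ξ‖ ^ 2 := integral_nonneg fun _ => by positivity
  simp only [ENNReal.toReal_ofNat, Real.rpow_ofNat] at e3
  rw [ENNReal.toReal_ofReal (by positivity), ENNReal.toReal_ofReal (by positivity)] at e3
  exact (Real.rpow_left_inj p1 p2 (by norm_num)).1 e3

lemma bdd_exp_integrable (f : ℝ → ℂ) (hf : Continuous f) (M c : ℝ) (hc : 0 < c)
    (hb : ∀ t, 0 ≤ t → ‖f t‖ ≤ M * Real.exp (-c * t)) : IntegrableOn f (Ioi 0) := by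
  refine Integrable.mono' ((exp_neg_integrableOn_Ioi 0 hc).const_mul M)
    hf.aestronglyMeasurable.restrict ?_
  filter_upwards [ae_restrict_mem measurableSet_Ioi] with t ht
  exact hb t (le_of_lt ht)

lemma norm_exp_aux (ω τ t : ℝ) : ‖Complex.exp (-((ω : ℂ) + τ * Complex.I) * t)‖ = Real.exp (-ω * t) := by
  rw [Complex.norm_exp]; simp

lemma laplace_integrable (f : ℝ → ℝ) (hf : Continuous f) (M ω τ : ℝ) (hω : 0 < ω)
    (hb : ∀ t, 0 ≤ t → |f t| ≤ M) :
    IntegrableOn (fun t : ℝ => (f t : ℂ) * Complex.exp (-((ω : ℂ) + τ * Complex.I) * t)) (Ioi 0) := by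
  refine bdd_exp_integrable _ (by fun_prop) M ω hω fun t ht => ?_
  rw [norm_mul, norm_exp_aux, Complex.norm_real]
  exact mul_le_mul_of_nonneg_right (hb t ht) (Real.exp_pos _).le

lemma laplace_plancherel (f : ℝ → ℝ) (hf : Continuous f) (M ω : ℝ) (hω : 0 < ω)
    (hb : ∀ t, 0 ≤ t → |f t| ≤ M) :
    Integrable (fun ξ : ℝ => ‖laplace f ((ω : ℂ) + ((2 * π * ξ : ℝ) : ℂ) * Complex.I)‖ ^ 2) ∧
    ∫ ξ : ℝ, ‖laplace f ((ω : ℂ) + ((2 * π * ξ : ℝ) : ℂ) * Complex.I)‖ ^ 2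
      = ∫ t in Ioi (0 : ℝ), f t ^ 2 * Real.exp (-2 * ω * t) := by
  set F : ℝ → ℂ := (Ioi (0 : ℝ)).indicator fun t => (f t : ℂ) * Complex.exp (-((ω : ℂ)) * t) with hF
  have hFi : Integrable F := by
    rw [hF, integrable_indicator_iff measurableSet_Ioi]
    simpa using laplace_integrable f hf M ω 0 hω hb
  have hsq : ∀ t, ‖F t‖ ^ 2 = (Ioi (0 : ℝ)).indicator (fun t => f t ^ 2 * Real.exp (-2 * ω * t)) t := by
    intro t
    by_cases ht : t ∈ Ioi (0 : ℝ)
    · rw [hF, indicator_of_mem ht, indicator_of_mem ht, norm_mul, Complex.norm_real, Complex.norm_exp,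
        mul_pow, ← Real.exp_nat_mul]
      simp
      left
      ring
    · rw [hF, indicator_of_notMem ht, indicator_of_notMem ht]; simp
  have hF2 : MemLp F 2 := by
    rw [memLp_two_iff_integrable_sq_norm hFi.1]
    simp_rw [hsq]
    rw [integrable_indicator_iff measurableSet_Ioi]
    refine Integrable.mono' ((exp_neg_integrableOn_Ioi 0 (b := 2 * ω) (by positivity)).const_mul (M ^ 2))
      (Continuous.aestronglyMeasurable (by fun_prop)) ?_
    filter_upwards [ae_restrict_mem measurableSet_Ioi] with t ht
    rw [Real.norm_of_nonneg (by positivity), ← sq_abs (f t), neg_mul]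
    gcongr
    exact hb t (le_of_lt ht)
  have hFour : ∀ ξ : ℝ, 𝓕 F ξ = laplace f ((ω : ℂ) + ((2 * π * ξ : ℝ) : ℂ) * Complex.I) := by
    intro ξ
    rw [Real.fourier_real_eq_integral_exp_smul, laplace, ← integral_indicator measurableSet_Ioi]
    congr 1; ext t
    by_cases ht : t ∈ Ioi (0 : ℝ)
    · rw [hF, indicator_of_mem ht, indicator_of_mem ht, smul_eq_mul, mul_left_comm, ← Complex.exp_add]
      congr 2
      push_cast
      ring
    · rw [hF, indicator_of_notMem ht, indicator_of_notMem ht]; simp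
  obtain ⟨a, b⟩ := plancherel F hFi hF2
  simp_rw [hFour, hsq] at a b
  rw [integral_indicator measurableSet_Ioi] at b
  exact ⟨a, b⟩

lemma conv_comm' (f h : ℝ → ℝ) (t : ℝ) : conv f h t = ∫ s in (0:ℝ)..t, f s * h (t - s) := by
  rw [conv]
  have := intervalIntegral.integral_comp_sub_left (a := 0) (b := t) (fun s => f s * h (t - s)) t
  simpa using this

lemma laplace_conv (f h : ℝ → ℝ) (hf : Continuous f) (hh : Continuous h) (M ω τ : ℝ) (hω : 0 < ω)
    (hb : ∀ t, 0 ≤ t → |f t| ≤ M) (hb' : ∀ t, 0 ≤ t → |h t| ≤ M) :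
    laplace (conv f h) ((ω : ℂ) + τ * Complex.I)
      = laplace f ((ω : ℂ) + τ * Complex.I) * laplace h ((ω : ℂ) + τ * Complex.I) := by
  have := integral_posConvolution (laplace_integrable f hf M ω τ hω hb)
    (laplace_integrable h hh M ω τ hω hb') (ContinuousLinearMap.mul ℝ ℂ)
  simp only [ContinuousLinearMap.mul_apply'] at this
  simp only [laplace]
  rw [← this]
  congr 1; ext t
  rw [conv_comm', ← intervalIntegral.integral_ofReal, ← intervalIntegral.integral_mul_const]
  congr 1; ext s
  have : Complex.exp (-((ω : ℂ) + τ * Complex.I) * t) =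
    Complex.exp (-((ω : ℂ) + τ * Complex.I) * s) * Complex.exp (-((ω : ℂ) + τ * Complex.I) * ((t - s : ℝ) : ℂ)) := by
    rw [← Complex.exp_add]; congr 1; push_cast; ring
  rw [this]; push_cast; ring

lemma laplace_deriv (k q : ℝ → ℝ) (hk : ∀ t, HasDerivAt k (q t) t) (hq : Continuous q) (h0 : k 0 = 0)
    (M ω τ : ℝ) (hω : 0 < ω)
    (hb : ∀ t, 0 ≤ t → |k t| ≤ M) (hb' : ∀ t, 0 ≤ t → |q t| ≤ M) :
    laplace q ((ω : ℂ) + τ * Complex.I)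
      = ((ω : ℂ) + τ * Complex.I) * laplace k ((ω : ℂ) + τ * Complex.I) := by
  have hkc : Continuous k := continuous_iff_continuousAt.2 fun t => (hk t).continuousAt
  set z := (ω : ℂ) + τ * Complex.I with hz
  have i1 := laplace_integrable q hq M ω τ hω hb'
  have i2 := (laplace_integrable k hkc M ω τ hω hb).const_mul z
  rw [← hz] at i1 i2
  have hd : ∀ t : ℝ, HasDerivAt (fun t : ℝ => (k t : ℂ) * Complex.exp (-z * t))
      ((q t : ℂ) * Complex.exp (-z * t) - z * ((k t : ℂ) * Complex.exp (-z * t))) t := by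
    intro t
    have e : HasDerivAt (fun t : ℝ => Complex.exp (-z * t)) (Complex.exp (-z * t) * (-z * 1)) t :=
      ((Complex.ofRealCLM.hasDerivAt (x := t)).const_mul (-z)).cexp
    refine ((hk t).ofReal_comp.mul e).congr_deriv ?_
    ring
  have ht : Tendsto (fun t : ℝ => (k t : ℂ) * Complex.exp (-z * t)) atTop (𝓝 0) := by
    have : Tendsto (fun t : ℝ => M * Real.exp (-ω * t)) atTop (𝓝 0) := by
      have := (Real.tendsto_exp_atBot.comp
        (tendsto_id.const_mul_atTop_of_neg (neg_lt_zero.2 hω))).const_mul M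
      simpa using this
    refine squeeze_zero_norm' ?_ this
    filter_upwards [eventually_ge_atTop 0] with t ht
    rw [norm_mul, hz, norm_exp_aux, Complex.norm_real]
    exact mul_le_mul_of_nonneg_right (hb t ht) (Real.exp_pos _).le
  have := integral_Ioi_of_hasDerivAt_of_tendsto' (a := 0) (fun t _ => hd t) (i1.sub i2) ht
  rw [integral_sub i1 i2, integral_const_mul] at this
  simp only [h0, laplace] at this ⊢
  rw [← sub_eq_zero, this]; simp

lemma conv_partial (d h : ℝ → ℝ) (hd : Continuous d) (hh : ContDiff ℝ 1 h) (t u : ℝ) :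
    HasDerivAt (fun t => ∫ s in (0:ℝ)..u, d s * h (t - s)) (∫ s in (0:ℝ)..u, d s * deriv h (t - s)) t := by
  have hh' : Continuous (deriv h) := hh.continuous_deriv le_rfl
  have hhc := hh.continuous
  obtain ⟨B, hB⟩ := ((isCompact_closedBall t 1).prod (isCompact_uIcc (a := 0) (b := u))).exists_bound_of_continuousOn
    (f := fun p : ℝ × ℝ => d p.2 * deriv h (p.1 - p.2)) (Continuous.continuousOn (by fun_prop))
  refine (intervalIntegral.hasDerivAt_integral_of_dominated_loc_of_deriv_le (bound := fun _ => B)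
    (F := fun t s => d s * h (t - s)) (F' := fun t s => d s * deriv h (t - s))
    (Metric.closedBall_mem_nhds t one_pos) ?_ ?_ ?_ ?_ ?_ ?_).2
  · exact Eventually.of_forall fun x => Continuous.aestronglyMeasurable (by fun_prop)
  · exact Continuous.intervalIntegrable (by fun_prop) _ _
  · exact Continuous.aestronglyMeasurable (by fun_prop)
  · exact Eventually.of_forall fun s hs x hx => hB (x, s) ⟨hx, uIoc_subset_uIcc hs⟩
  · exact intervalIntegrable_const
  · refine Eventually.of_forall fun s hs x hx => ?_
    have := (hh.differentiable one_ne_zero (x - s)).hasDerivAt.comp_sub_const x s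
    exact this.const_mul _

lemma conv_continuous2 (d h : ℝ → ℝ) (hd : Continuous d) (hh : Continuous h) :
    Continuous (fun p : ℝ × ℝ => ∫ s in (0:ℝ)..p.2, d s * h (p.1 - s)) :=
  intervalIntegral.continuous_parametric_intervalIntegral_of_continuous
    (f := fun (p : ℝ × ℝ) s => d s * h (p.1 - s)) (by fun_prop) continuous_snd

lemma conv_hasDerivAt (d h : ℝ → ℝ) (hd : Continuous d) (hh : ContDiff ℝ 1 h) (t : ℝ) :
    HasDerivAt (conv d h) (h 0 * d t + conv d (deriv h) t) t := by
  have hh' : Continuous (deriv h) := hh.continuous_deriv le_rfl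
  have hhc := hh.continuous
  have key := hasStrictFDerivAt_uncurry_coprod (𝕜 := ℝ) (u := ((t, t) : ℝ × ℝ))
    (f := fun t u => ∫ s in (0:ℝ)..u, d s * h (t - s))
    (f₁ := fun t u => ContinuousLinearMap.toSpanSingleton ℝ (∫ s in (0:ℝ)..u, d s * deriv h (t - s)))
    (f₂ := fun t u => ContinuousLinearMap.toSpanSingleton ℝ (d u * h (t - u)))
    (Eventually.of_forall fun v => (conv_partial d h hd hh v.1 v.2).hasFDerivAt)
    (Eventually.of_forall fun v => by
      have : Continuous fun s => d s * h (v.1 - s) := by fun_prop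
      exact (this.integral_hasStrictDerivAt 0 v.2).hasDerivAt.hasFDerivAt)
    (by
      have := conv_continuous2 d (deriv h) hd hh'
      exact ((ContinuousLinearMap.toSpanSingletonCLE (𝕜 := ℝ) (E := ℝ)).continuous.comp this).continuousAt)
    (by
      have : Continuous fun p : ℝ × ℝ => d p.2 * h (p.1 - p.2) := by fun_prop
      exact ((ContinuousLinearMap.toSpanSingletonCLE (𝕜 := ℝ) (E := ℝ)).continuous.comp this).continuousAt)
  have h2 := HasFDerivAt.comp_hasDerivAt (f := fun t : ℝ => (t, t)) t key.hasFDerivAt ((hasDerivAt_id t).prodMk (hasDerivAt_id t))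
  have e : conv d h = (fun p : ℝ × ℝ => ∫ s in (0:ℝ)..p.2, d s * h (p.1 - s)) ∘ fun t => (t, t) := by
    ext t; exact conv_comm' d h t
  rw [e, conv_comm']
  refine h2.congr_deriv ?_
  change ContinuousLinearMap.toSpanSingleton ℝ (∫ s in (0:ℝ)..t, d s * deriv h (t - s)) 1 + ContinuousLinearMap.toSpanSingleton ℝ (d t * h (t - t)) 1 = _
  simp
  ring

lemma conv_continuous (d h : ℝ → ℝ) (hd : Continuous d) (hh : Continuous h) :
    Continuous (conv d h) := by
  have e : conv d h = (fun p : ℝ × ℝ => ∫ s in (0:ℝ)..p.2, d s * h (p.1 - s)) ∘ fun t => (t, t) := by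
    ext t; exact conv_comm' d h t
  rw [e]
  exact (conv_continuous2 d h hd hh).comp (by fun_prop)

lemma conv_bound (d h : ℝ → ℝ) (A C σ : ℝ) (hA : 0 ≤ A) (hC : 0 ≤ C) (hσ : 0 < σ)
    (hd : ∀ t : ℝ, 0 ≤ t → |d t| ≤ A * Real.exp (-σ * t))
    (hh : ∀ t : ℝ, 0 ≤ t → |h t| ≤ C * Real.exp (-σ * t)) (t : ℝ) (ht : 0 ≤ t) :
    |conv d h t| ≤ A * C / σ := by
  have := intervalIntegral.norm_integral_le_of_norm_le_const (a := 0) (b := t)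
    (f := fun s => d (t - s) * h s) (C := A * C * Real.exp (-σ * t)) (by
      intro s hs
      rw [uIoc_of_le ht] at hs
      rw [norm_mul]
      calc _ ≤ (A * Real.exp (-σ * (t - s))) * (C * Real.exp (-σ * s)) :=
            mul_le_mul (hd _ (by linarith [hs.2])) (hh _ hs.1.le) (abs_nonneg _) (by positivity)
        _ = A * C * (Real.exp (-σ * (t - s)) * Real.exp (-σ * s)) := by ring
        _ = _ := by rw [← Real.exp_add]; congr 2; ring)
  rw [sub_zero, abs_of_nonneg ht] at this
  refine this.trans ?_
  rw [le_div_iff₀ hσ]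
  have h1 : σ * t ≤ Real.exp (σ * t) := by linarith [Real.add_one_le_exp (σ * t)]
  have h2 : Real.exp (-σ * t) * (σ * t) ≤ 1 := by
    calc _ ≤ Real.exp (-σ * t) * Real.exp (σ * t) := by gcongr
      _ = 1 := by rw [← Real.exp_add]; simp
  calc _ = A * C * (Real.exp (-σ * t) * (σ * t)) := by ring
    _ ≤ A * C * 1 := by gcongr
    _ = _ := by ring

lemma conv_sub (f g h : ℝ → ℝ) (hf : Continuous f) (hg : Continuous g) (hh : Continuous h) (t : ℝ) :
    conv (fun s => f s - g s) h t = conv f h t - conv g h t := by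
  rw [conv, conv, conv, ← intervalIntegral.integral_sub]
  · congr 1; ext s; ring
  · exact Continuous.intervalIntegrable (by fun_prop) _ _
  · exact Continuous.intervalIntegrable (by fun_prop) _ _

end helpers

/-- **Error bound with exact `h`.** If `g = γ*h` and `g_ε = γ_ε*h`, then
`‖γ − γ_ε‖²_{L²(ρ)} ≤ (1/m_ω^h) ‖g − g_ε‖²_{H¹_α(ρ)}`. -/
theorem error_bound_exact_h (γ γε h g gε : ℝ → ℝ) (C σ α₁ α₂ ω : ℝ)
    (hC : 0 < C) (hσ : 0 < σ) (hα₁ : 0 < α₁) (hα₂ : 0 < α₂) (hα : α₁ + α₂ = 1)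
    (hω : 0 < ω)
    (hsmoothγ : ContDiff ℝ (⊤ : ℕ∞) γ) (hsmoothγε : ContDiff ℝ (⊤ : ℕ∞) γε) (hsmoothh : ContDiff ℝ (⊤ : ℕ∞) h)
    (hdecayγ : ∀ t : ℝ, 0 ≤ t → |γ t| ≤ C * Real.exp (-σ * t))
    (hdecayγε : ∀ t : ℝ, 0 ≤ t → |γε t| ≤ C * Real.exp (-σ * t))
    (hdecayh : ∀ t : ℝ, 0 ≤ t → |h t| ≤ C * Real.exp (-σ * t))
    (hdecayh' : ∀ t : ℝ, 0 ≤ t → |deriv h t| ≤ C * Real.exp (-σ * t))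
    (hm : 0 < ⨅ τ : ℝ, specWeight h α₁ α₂ ω τ)
    (hg : ∀ t : ℝ, 0 ≤ t → g t = conv γ h t)
    (hgε : ∀ t : ℝ, 0 ≤ t → gε t = conv γε h t) :
    (∫ t in Set.Ioi (0 : ℝ), (γ t - γε t) ^ 2 * Real.exp (-2 * ω * t))
      ≤ (1 / ⨅ τ : ℝ, specWeight h α₁ α₂ ω τ) *
        ∫ t in Set.Ioi (0 : ℝ),
          (α₁ * (g t - gε t) ^ 2 + α₂ * (deriv g t - deriv gε t) ^ 2) *
            Real.exp (-2 * ω * t) := by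
  have cγ := hsmoothγ.continuous
  have cγε := hsmoothγε.continuous
  have ch := hsmoothh.continuous
  have h1 : ContDiff ℝ 1 h := hsmoothh.of_le (by exact_mod_cast le_top)
  have ch' : Continuous (deriv h) := h1.continuous_deriv le_rfl
  set d : ℝ → ℝ := fun s => γ s - γε s with hd
  have cd : Continuous d := by fun_prop
  have bd : ∀ t : ℝ, 0 ≤ t → |d t| ≤ (2 * C) * Real.exp (-σ * t) := fun t ht => by
    have := abs_sub (γ t) (γε t)
    linarith [hdecayγ t ht, hdecayγε t ht]
  set k := conv d h with hk
  set q : ℝ → ℝ := fun t => h 0 * d t + conv d (deriv h) t with hq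
  have dk : ∀ t, HasDerivAt k (q t) t := conv_hasDerivAt d h cd h1
  have cq : Continuous q := (continuous_const.mul cd).add (conv_continuous d _ cd ch')
  have ck : Continuous k := conv_continuous d h cd ch
  have hexp : ∀ t : ℝ, 0 ≤ t → Real.exp (-σ * t) ≤ 1 := fun t ht => by
    rw [Real.exp_le_one_iff]; nlinarith
  have bd' : ∀ t : ℝ, 0 ≤ t → |d t| ≤ 2 * C := fun t ht =>
    (bd t ht).trans (mul_le_of_le_one_right (by positivity) (hexp t ht))
  have bh' : ∀ t : ℝ, 0 ≤ t → |h t| ≤ 2 * C := fun t ht =>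
    (hdecayh t ht).trans (by nlinarith [hexp t ht])
  have bk := conv_bound d h (2 * C) C σ (by positivity) hC.le hσ bd hdecayh
  have bk2 := conv_bound d (deriv h) (2 * C) C σ (by positivity) hC.le hσ bd hdecayh'
  set M := |h 0| * (2 * C) + 2 * C * C / σ with hM
  have bq : ∀ t : ℝ, 0 ≤ t → |q t| ≤ M := fun t ht => by
    refine (abs_add_le _ _).trans (add_le_add ?_ (bk2 t ht))
    rw [abs_mul]
    exact mul_le_mul_of_nonneg_left (bd' t ht) (abs_nonneg _)
  have bkM : ∀ t : ℝ, 0 ≤ t → |k t| ≤ M := fun t ht =>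
    (bk t ht).trans (le_add_of_nonneg_left (by positivity))
  have k0 : k 0 = 0 := by simp [hk, conv]
  obtain ⟨id, ed⟩ := laplace_plancherel d cd _ ω hω bd'
  obtain ⟨ik, ek⟩ := laplace_plancherel k ck _ ω hω bkM
  obtain ⟨iq, eq⟩ := laplace_plancherel q cq _ ω hω bq
  -- rewrite the right-hand side
  have hR : ∫ t in Set.Ioi (0 : ℝ),
          (α₁ * (g t - gε t) ^ 2 + α₂ * (deriv g t - deriv gε t) ^ 2) *
            Real.exp (-2 * ω * t)
      = ∫ t in Set.Ioi (0 : ℝ), (α₁ * (k t ^ 2 * Real.exp (-2 * ω * t))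
          + α₂ * (q t ^ 2 * Real.exp (-2 * ω * t))) := by
    refine setIntegral_congr_fun measurableSet_Ioi fun t ht => ?_
    have ht' : (0 : ℝ) < t := ht
    have e1 : g t - gε t = k t := by
      rw [hg t ht'.le, hgε t ht'.le, hk, hd, conv_sub γ γε h cγ cγε ch]
    have dg : deriv g t = h 0 * γ t + conv γ (deriv h) t := by
      refine HasDerivAt.deriv ((conv_hasDerivAt γ h cγ h1 t).congr_of_eventuallyEq ?_)
      filter_upwards [Ioi_mem_nhds ht'] with s hs using hg s (le_of_lt hs)
    have dgε : deriv gε t = h 0 * γε t + conv γε (deriv h) t := by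
      refine HasDerivAt.deriv ((conv_hasDerivAt γε h cγε h1 t).congr_of_eventuallyEq ?_)
      filter_upwards [Ioi_mem_nhds ht'] with s hs using hgε s (le_of_lt hs)
    have e2 : deriv g t - deriv gε t = q t := by
      rw [dg, dgε]
      simp only [hq, hd]
      rw [conv_sub γ γε (deriv h) cγ cγε ch']
      ring
    simp only [e1, e2]
    ring
  have isq : ∀ (f : ℝ → ℝ) (B : ℝ), Continuous f → (∀ t, 0 ≤ t → |f t| ≤ B) →
      IntegrableOn (fun t => f t ^ 2 * Real.exp (-2 * ω * t)) (Set.Ioi 0) := by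
    intro f B hf hB
    refine Integrable.mono' ((exp_neg_integrableOn_Ioi 0 (b := 2 * ω) (by positivity)).const_mul (B ^ 2))
      (Continuous.aestronglyMeasurable (by fun_prop)) ?_
    filter_upwards [ae_restrict_mem measurableSet_Ioi] with t ht
    rw [Real.norm_of_nonneg (by positivity), ← sq_abs (f t), neg_mul]
    gcongr
    exact hB t (le_of_lt ht)
  rw [hR, integral_add ((isq k M ck bkM).const_mul α₁) ((isq q M cq bq).const_mul α₂),
    integral_const_mul, integral_const_mul, ← ek, ← eq, ← integral_const_mul, ← integral_const_mul,
    ← integral_add (ik.const_mul α₁) (iq.const_mul α₂)]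
  change (∫ t in Set.Ioi (0 : ℝ), d t ^ 2 * Real.exp (-2 * ω * t)) ≤ _
  rw [← ed, one_div, inv_mul_eq_div, le_div_iff₀ hm, mul_comm, ← integral_const_mul]
  refine integral_mono (id.const_mul _) ((ik.const_mul α₁).add (iq.const_mul α₂)) fun ξ => ?_
  have hle : (⨅ τ : ℝ, specWeight h α₁ α₂ ω τ) ≤ specWeight h α₁ α₂ ω (2 * π * ξ) :=
    ciInf_le ⟨0, by rintro _ ⟨τ, rfl⟩; simp only [specWeight]; positivity⟩ _
  simp only
  rw [laplace_deriv k q dk cq k0 M ω _ hω bkM bq, hk, laplace_conv d h cd ch (2 * C) ω _ hω bd' bh']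
  refine (mul_le_mul_of_nonneg_right hle (by positivity)).trans (le_of_eq ?_)
  simp only [specWeight, norm_mul]
  ring
end
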